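/- Let n ≥ 1, let μ be the normalized Haar probability measure on the unitary group U(n), and let ν be the normalized Haar probability measure on the circle group {z ∈ ℂ : |z| = 1}. Then for every Borel set S ⊆ ℂ, the integral over U(n) (with respect to μ) of the number of eigenvalues of Q lying in S, counted with multiplicity, equals n times ν({z in the circle : (z : ℂ) ∈ S}). Equivalently, a generic eigenvalue of a Haar-distributed unitary matrix is uniformly distributed on the unit circle. -/

import Mathlib

open MeasureTheory
open scoped Classical ENNReal

noncomputable instance matrixMeasurableSpace {m n α : Type*} [MeasurableSpace α] :
    MeasurableSpace (Matrix m n α) :=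
  (inferInstance : MeasurableSpace (m → n → α))

/-- The Borel σ-algebra on the circle group. -/
noncomputable instance Circle.instMeasurableSpace : MeasurableSpace Circle :=
  borel Circle

instance Circle.instBorelSpace : BorelSpace Circle := ⟨rfl⟩

/-!
Let `ρ` be the mean measure of the eigenvalues, `ρ S = 𝔼 #{eigenvalues in S}`. It has mass `n` and
lives on the unit circle. Multiplying `Q` by a unimodular scalar `z` rotates its eigenvalues by `z`
and preserves Haar measure, so `ρ` is invariant under rotations, and uniqueness of Haar measure on
the circle gives `ρ = n • ν`. That `ρ` is well defined needs the eigenvalue count to be measurable: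
the pairs (eigenvalue tuple, matrix) form a closed set, and projecting the closed part of it where
at least `c` entries lie in a closed set `K` along the σ-compact space of tuples gives a Borel set.
-/

open Polynomial

section InvariantMeasures

variable {G X Y : Type*} [MeasurableSpace X] [MeasurableSpace Y]

lemma smulInvariantMeasure_comap [Group G] [MulAction G X] [MulAction G Y]
    {f : X → Y} (hf : MeasurableEmbedding f) (hsmul : ∀ (g : G) (x : X), f (g • x) = g • f x)
    (ρ : Measure Y) [SMulInvariantMeasure G Y ρ] :
    SMulInvariantMeasure G X (ρ.comap f) where
  measure_preimage_smul g s _ := by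
    have himage : f '' ((g • ·) ⁻¹' s) = (g • ·) ⁻¹' (f '' s) := by
      ext y
      constructor
      · rintro ⟨x, hx, rfl⟩
        exact ⟨g • x, hx, hsmul g x⟩
      · rintro ⟨x, hx, hxy⟩
        exact ⟨g⁻¹ • x, by simpa using hx, by rw [hsmul, hxy, inv_smul_smul]⟩
    rw [hf.comap_apply, hf.comap_apply, himage, measure_preimage_smul]

lemma smulInvariantMeasure_bind [SMul G X] [SMul G Y]
    [MeasurableConstSMul G X] [MeasurableConstSMul G Y]
    {κ : X → Measure Y} (hκ : Measurable κ)
    (hsmul : ∀ (g : G) (x : X), κ (g • x) = (κ x).map (g • ·))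
    (μ : Measure X) [SMulInvariantMeasure G X μ] :
    SMulInvariantMeasure G Y (μ.bind κ) where
  measure_preimage_smul g s hs := by
    have hg : Measurable (fun y : Y => g • y) := measurable_const_smul g
    calc
      μ.bind κ ((g • ·) ⁻¹' s) = ∫⁻ x, κ (g • x) s ∂μ := by
        simp_rw [Measure.bind_apply (hg hs) hκ.aemeasurable, hsmul, Measure.map_apply hg hs]
      _ = ∫⁻ x, κ x s ∂μ :=
        (measurePreserving_smul g μ).lintegral_comp ((Measure.measurable_coe hs).comp hκ)
      _ = μ.bind κ s := (Measure.bind_apply hs hκ.aemeasurable).symm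

end InvariantMeasures

lemma eq_measure_univ_smul_of_isMulLeftInvariant {G : Type*} [Group G] [TopologicalSpace G]
    [IsTopologicalGroup G] [CompactSpace G] [MeasurableSpace G] [BorelSpace G]
    (ρ ν : Measure G) [ρ.IsMulLeftInvariant] [IsFiniteMeasure ρ]
    [ν.IsHaarMeasure] [IsProbabilityMeasure ν] :
    ρ = ρ Set.univ • ν := by
  obtain ⟨c, hc⟩ : ∃ c : ℝ≥0∞, ρ = c • ν :=
    ⟨_, Measure.isMulInvariant_eq_smul_of_compactSpace ρ ν⟩
  have hmass : ρ Set.univ = c := by rw [hc]; simp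
  rw [hmass, ← hc]

lemma continuous_circle_coe : Continuous (fun z : Circle => (z : ℂ)) :=
  continuous_subtype_val

lemma measurableEmbedding_circle_coe : MeasurableEmbedding (fun z : Circle => (z : ℂ)) :=
  (continuous_circle_coe.isClosedEmbedding Circle.coe_injective).measurableEmbedding

lemma eq_measure_univ_smul_map_circle_coe (ρ : Measure ℂ) [IsFiniteMeasure ρ]
    [SMulInvariantMeasure Circle ℂ ρ] (hρ : ∀ᵐ z ∂ρ, z ∈ Metric.sphere (0 : ℂ) 1)
    (ν : Measure Circle) [ν.IsHaarMeasure] [IsProbabilityMeasure ν] :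
    ρ = ρ Set.univ • ν.map (fun z : Circle => (z : ℂ)) := by
  have hcoe := measurableEmbedding_circle_coe
  set ρ' := ρ.comap (fun z : Circle => (z : ℂ))
  have hmap : ρ'.map (fun z : Circle => (z : ℂ)) = ρ := by
    rw [hcoe.map_comap]
    exact Measure.restrict_eq_self_of_ae_mem (hρ.mono fun z hz => ⟨⟨z, hz⟩, rfl⟩)
  have hmass : ρ' Set.univ = ρ Set.univ := by
    rw [← hmap, Measure.map_apply hcoe.measurable .univ, Set.preimage_univ]
  have : IsFiniteMeasure ρ' := ⟨hmass ▸ measure_lt_top ρ _⟩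
  have : SMulInvariantMeasure Circle Circle ρ' :=
    smulInvariantMeasure_comap hcoe (fun _ _ => rfl) ρ
  have : ρ'.IsMulLeftInvariant := ⟨fun z => MeasureTheory.map_smul z ρ'⟩
  calc
    ρ = ρ'.map (fun z : Circle => (z : ℂ)) := hmap.symm
    _ = ρ Set.univ • ν.map (fun z : Circle => (z : ℂ)) := by
      rw [eq_measure_univ_smul_of_isMulLeftInvariant ρ' ν, Measure.map_smul, hmass]

lemma measurableSet_image_snd_of_isClosed {X Y : Type*} [TopologicalSpace X] [SigmaCompactSpace X]
    [TopologicalSpace Y] [MeasurableSpace Y] [OpensMeasurableSpace Y] {R : Set (X × Y)}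
    (hR : IsClosed R) : MeasurableSet (Prod.snd '' R) := by
  have hcover : Prod.snd '' R =
      ⋃ k, (Prod.snd : compactCovering X k × Y → Y) '' (Prod.map (↑) id ⁻¹' R) := by
    ext y
    simp only [Set.mem_image, Prod.exists, exists_eq_right, Set.mem_iUnion, Set.mem_preimage,
      Prod.map_apply, id_eq, Subtype.exists, exists_prop]
    constructor
    · rintro ⟨x, hx⟩
      obtain ⟨k, hk⟩ := exists_mem_compactCovering x
      exact ⟨k, x, hk, hx⟩
    · rintro ⟨k, x, -, hx⟩
      exact ⟨x, hx⟩
  rw [hcover]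
  refine MeasurableSet.iUnion fun k => IsClosed.measurableSet ?_
  have := isCompact_iff_compactSpace.mp (isCompact_compactCovering X k)
  exact isClosedMap_snd_of_compactSpace _ (hR.preimage (by fun_prop))

lemma exists_map_univ_eq_of_card_eq {ι α : Type*} [Fintype ι] (s : Multiset α)
    (hs : s.card = Fintype.card ι) : ∃ x : ι → α, Finset.univ.val.map x = s := by
  obtain ⟨e⟩ : Nonempty (ι ≃ s) := Fintype.card_eq.mp (by rw [Multiset.card_coe, hs])
  refine ⟨fun i => (e i).1, ?_⟩
  conv_rhs => rw [← s.map_univ_coe, ← Finset.map_univ_equiv e]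
  rw [Finset.map_val, Multiset.map_map]
  rfl

instance matrixBorelSpace {m n α : Type*} [Countable m] [Countable n] [TopologicalSpace α]
    [SecondCountableTopology α] [MeasurableSpace α] [BorelSpace α] :
    BorelSpace (Matrix m n α) :=
  inferInstanceAs (BorelSpace (m → n → α))

section Eigenvalues

variable {n : Type*} [Fintype n] [DecidableEq n] {A : Matrix n n ℂ} {x : n → ℂ}

/-- `x` lists the eigenvalues of `A` with algebraic multiplicity, in some order; the rows of `A`
serve as index set. -/
def IsEigenvalueTuple (A : Matrix n n ℂ) (x : n → ℂ) : Prop :=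
  A.charpoly = ∏ i, (X - C (x i))

lemma exists_isEigenvalueTuple (A : Matrix n n ℂ) : ∃ x, IsEigenvalueTuple A x := by
  have hsplits := IsAlgClosed.splits A.charpoly
  obtain ⟨x, hx⟩ := exists_map_univ_eq_of_card_eq (ι := n) A.charpoly.roots (by
    rw [← hsplits.natDegree_eq_card_roots, A.charpoly_natDegree_eq_dim])
  refine ⟨x, ?_⟩
  rw [IsEigenvalueTuple, hsplits.eq_prod_roots_of_monic A.charpoly_monic, ← hx, Multiset.map_map]
  rfl

lemma isEigenvalueTuple_iff_forall_det :
    IsEigenvalueTuple A x ↔ ∀ t : ℂ, (Matrix.scalar n t - A).det = ∏ i, (t - x i) := by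
  have heval : IsEigenvalueTuple A x ↔ ∀ t, A.charpoly.eval t = (∏ i, (X - C (x i))).eval t :=
    ⟨fun h t => congrArg (eval t) h, Polynomial.funext⟩
  simp only [heval, Matrix.eval_charpoly, eval_prod, eval_sub, eval_X, eval_C]

lemma isClosed_setOf_isEigenvalueTuple :
    IsClosed {p : (n → ℂ) × Matrix n n ℂ | IsEigenvalueTuple p.2 p.1} := by
  simp only [isEigenvalueTuple_iff_forall_det, Set.ofPred_forall, Matrix.scalar_apply]
  exact isClosed_iInter fun t => isClosed_eq (by fun_prop) (by fun_prop)

namespace IsEigenvalueTuple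

lemma roots_charpoly (h : IsEigenvalueTuple A x) : A.charpoly.roots = Finset.univ.val.map x := by
  rw [h]
  simpa [Multiset.map_map] using roots_multiset_prod_X_sub_C (Finset.univ.val.map x)

lemma mem_spectrum (h : IsEigenvalueTuple A x) (i : n) : x i ∈ spectrum ℂ A := by
  rw [Matrix.mem_spectrum_iff_isRoot_charpoly, h, IsRoot, eval_prod]
  exact Finset.prod_eq_zero (Finset.mem_univ i) (by simp)

lemma smul (h : IsEigenvalueTuple A x) (z : ℂ) : IsEigenvalueTuple (z • A) (z • x) := by
  rw [isEigenvalueTuple_iff_forall_det] at h ⊢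
  intro t
  obtain rfl | hz := eq_or_ne z 0
  · simp
  calc
    (Matrix.scalar n t - z • A).det = (z • (Matrix.scalar n (z⁻¹ * t) - A)).det := by
      rw [smul_sub]
      congr 2
      ext i j
      simp [Matrix.diagonal_apply, hz]
    _ = ∏ i, z * (z⁻¹ * t - x i) := by
      rw [Matrix.det_smul, h, Finset.prod_mul_distrib, Finset.prod_const, Finset.card_univ]
    _ = ∏ i, (t - (z • x) i) := by
      simp [mul_sub, hz]

end IsEigenvalueTuple

/-- The eigenvalue counting measure of `A`: the sum of the Dirac masses at its eigenvalues, taken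
with algebraic multiplicity and not normalized. -/
noncomputable def eigenvalueMeasure (A : Matrix n n ℂ) : Measure ℂ :=
  (A.charpoly.roots.map Measure.dirac).sum

lemma IsEigenvalueTuple.eigenvalueMeasure_eq_sum_dirac (h : IsEigenvalueTuple A x) :
    eigenvalueMeasure A = ∑ i, Measure.dirac (x i) := by
  rw [eigenvalueMeasure, h.roots_charpoly, Multiset.map_map]
  rfl

lemma IsEigenvalueTuple.eigenvalueMeasure_apply (h : IsEigenvalueTuple A x) {S : Set ℂ}
    (hS : MeasurableSet S) : eigenvalueMeasure A S = ∑ i, S.indicator 1 (x i) := by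
  simp [h.eigenvalueMeasure_eq_sum_dirac, Measure.dirac_apply' _ hS]

lemma eigenvalueMeasure_apply (A : Matrix n n ℂ) {S : Set ℂ} (hS : MeasurableSet S) :
    eigenvalueMeasure A S = (A.charpoly.roots.filter (· ∈ S)).card := by
  obtain ⟨x, hx⟩ := exists_isEigenvalueTuple A
  rw [hx.eigenvalueMeasure_apply hS, hx.roots_charpoly, Multiset.filter_map, Multiset.card_map]
  simp only [Set.indicator_apply, Pi.one_apply, Finset.sum_boole]
  rfl

lemma eigenvalueMeasure_univ (A : Matrix n n ℂ) :
    eigenvalueMeasure A Set.univ = Fintype.card n := by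
  obtain ⟨x, hx⟩ := exists_isEigenvalueTuple A
  simp [hx.eigenvalueMeasure_eq_sum_dirac]

instance isFiniteMeasure_eigenvalueMeasure (A : Matrix n n ℂ) :
    IsFiniteMeasure (eigenvalueMeasure A) :=
  ⟨by simp [eigenvalueMeasure_univ]⟩

lemma ae_eigenvalueMeasure_mem_spectrum (A : Matrix n n ℂ) :
    ∀ᵐ z ∂eigenvalueMeasure A, z ∈ spectrum ℂ A := by
  obtain ⟨x, hx⟩ := exists_isEigenvalueTuple A
  simpa [hx.eigenvalueMeasure_eq_sum_dirac, ae_dirac_eq] using hx.mem_spectrum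

lemma eigenvalueMeasure_smul (z : ℂ) (A : Matrix n n ℂ) :
    eigenvalueMeasure (z • A) = (eigenvalueMeasure A).map (z • ·) := by
  obtain ⟨x, hx⟩ := exists_isEigenvalueTuple A
  have hz : Measurable (fun w : ℂ => z • w) := measurable_const_smul z
  rw [hx.eigenvalueMeasure_eq_sum_dirac, (hx.smul z).eigenvalueMeasure_eq_sum_dirac,
    Measure.map_finset_sum hz.aemeasurable]
  simp only [Measure.map_dirac, Pi.smul_apply]

lemma measurableSet_setOf_le_eigenvalueMeasure {K : Set ℂ} (hK : IsClosed K) (c : ℝ≥0∞) :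
    MeasurableSet {A : Matrix n n ℂ | c ≤ eigenvalueMeasure A K} := by
  have hcount : UpperSemicontinuous
      (fun x : n → ℂ => ∑ i, K.indicator (1 : ℂ → ℝ≥0∞) (x i)) :=
    upperSemicontinuous_sum fun i _ =>
      (hK.upperSemicontinuous_indicator zero_le_one).comp (continuous_apply i)
  have himage : {A : Matrix n n ℂ | c ≤ eigenvalueMeasure A K} =
      Prod.snd '' {p : (n → ℂ) × Matrix n n ℂ |
        IsEigenvalueTuple p.2 p.1 ∧ c ≤ ∑ i, K.indicator (1 : ℂ → ℝ≥0∞) (p.1 i)} := by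
    ext A
    simp only [Set.mem_image, Set.mem_ofPred_eq, Prod.exists, exists_eq_right]
    constructor
    · intro hc
      obtain ⟨x, hx⟩ := exists_isEigenvalueTuple A
      exact ⟨x, hx, hx.eigenvalueMeasure_apply hK.measurableSet ▸ hc⟩
    · rintro ⟨x, hx, hc⟩
      rwa [hx.eigenvalueMeasure_apply hK.measurableSet]
  rw [himage]
  exact measurableSet_image_snd_of_isClosed <| isClosed_setOf_isEigenvalueTuple.inter <|
    (hcount.isClosed_preimage c).preimage continuous_fst

lemma measurable_eigenvalueMeasure :
    Measurable (eigenvalueMeasure : Matrix n n ℂ → Measure ℂ) :=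
  .measure_of_isPiSystem
    ((BorelSpace.measurable_eq (α := ℂ)).trans borel_eq_generateFrom_isClosed)
    isPiSystem_isClosed
    (fun _ hK => measurable_of_Ici (measurableSet_setOf_le_eigenvalueMeasure hK))
    (by simp only [eigenvalueMeasure_univ, measurable_const])

section RandomMatrix

variable {Ω : Type*} [MeasurableSpace Ω] {μ : Measure Ω} {M : Ω → Matrix n n ℂ}

/-- The mean measure `S ↦ 𝔼 #{eigenvalues of M in S}` of the eigenvalues of the random matrix
`M` on `(Ω, μ)`. It is defined through the law of `M`. -/
noncomputable def meanEigenvalueMeasure (M : Ω → Matrix n n ℂ) (μ : Measure Ω) : Measure ℂ :=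
  (μ.map M).bind eigenvalueMeasure

lemma meanEigenvalueMeasure_apply (hM : AEMeasurable M μ) {S : Set ℂ} (hS : MeasurableSet S) :
    meanEigenvalueMeasure M μ S = ∫⁻ ω, eigenvalueMeasure (M ω) S ∂μ := by
  rw [meanEigenvalueMeasure, Measure.bind_apply hS measurable_eigenvalueMeasure.aemeasurable]
  exact lintegral_map' ((Measure.measurable_coe hS).comp measurable_eigenvalueMeasure).aemeasurable
    hM

lemma meanEigenvalueMeasure_univ (hM : AEMeasurable M μ) :
    meanEigenvalueMeasure M μ Set.univ = Fintype.card n * μ Set.univ := by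
  simp [meanEigenvalueMeasure_apply hM, eigenvalueMeasure_univ]

instance smulInvariantMeasure_meanEigenvalueMeasure
    [SMulInvariantMeasure Circle (Matrix n n ℂ) (μ.map M)] :
    SMulInvariantMeasure Circle ℂ (meanEigenvalueMeasure M μ) :=
  smulInvariantMeasure_bind measurable_eigenvalueMeasure
    (fun z A => by simpa only [Circle.smul_def] using eigenvalueMeasure_smul (z : ℂ) A) (μ.map M)

lemma ae_meanEigenvalueMeasure_of_spectrum_subset (hM : AEMeasurable M μ) {S : Set ℂ}
    (hS : MeasurableSet S) (hspec : ∀ᵐ ω ∂μ, spectrum ℂ (M ω) ⊆ S) :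
    ∀ᵐ z ∂meanEigenvalueMeasure M μ, z ∈ S := by
  rw [ae_iff, ← Set.compl_def, meanEigenvalueMeasure_apply hM hS.compl]
  refine lintegral_eq_zero_of_ae_eq_zero (hspec.mono fun ω hω => ?_)
  exact (ae_eigenvalueMeasure_mem_spectrum (M ω)).mono fun z hz => hω hz

lemma meanEigenvalueMeasure_eq_smul_map_circle_coe [IsFiniteMeasure μ] (hM : AEMeasurable M μ)
    [SMulInvariantMeasure Circle (Matrix n n ℂ) (μ.map M)]
    (hspec : ∀ᵐ ω ∂μ, spectrum ℂ (M ω) ⊆ Metric.sphere 0 1)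
    (ν : Measure Circle) [ν.IsHaarMeasure] [IsProbabilityMeasure ν] :
    meanEigenvalueMeasure M μ =
      (Fintype.card n * μ Set.univ) • ν.map (fun z : Circle => (z : ℂ)) := by
  have hmass := meanEigenvalueMeasure_univ hM
  have : IsFiniteMeasure (meanEigenvalueMeasure M μ) := ⟨by rw [hmass]; finiteness⟩
  rw [← hmass]
  exact eq_measure_univ_smul_map_circle_coe _
    (ae_meanEigenvalueMeasure_of_spectrum_subset hM Metric.isClosed_sphere.measurableSet hspec) ν

theorem haar_unitary_generic_eigenvalue_uniform_general [IsProbabilityMeasure μ]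
    (hM : AEMeasurable M μ) [SMulInvariantMeasure Circle (Matrix n n ℂ) (μ.map M)]
    (hspec : ∀ᵐ ω ∂μ, spectrum ℂ (M ω) ⊆ Metric.sphere 0 1)
    (ν : Measure Circle) [ν.IsHaarMeasure] [IsProbabilityMeasure ν]
    {S : Set ℂ} (hS : MeasurableSet S) :
    ∫⁻ ω, (((M ω).charpoly.roots.filter (fun z => z ∈ S)).card : ℝ≥0∞) ∂μ =
      Fintype.card n * ν ((fun z : Circle => (z : ℂ)) ⁻¹' S) := by
  simp_rw [← eigenvalueMeasure_apply _ hS]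
  rw [← meanEigenvalueMeasure_apply hM hS,
    meanEigenvalueMeasure_eq_smul_map_circle_coe hM hspec ν, measure_univ, mul_one,
    Measure.smul_apply, Measure.map_apply continuous_circle_coe.measurable hS, smul_eq_mul]

end RandomMatrix

open scoped Matrix.Norms.L2Operator in
lemma spectrum_unitaryGroup_subset_sphere (Q : Matrix.unitaryGroup n ℂ) :
    spectrum ℂ (Q : Matrix n n ℂ) ⊆ Metric.sphere 0 1 :=
  spectrum.subset_circle_of_unitary Q.2

lemma exists_unitaryGroup_coe_mul_eq_smul (z : Circle) :
    ∃ U : Matrix.unitaryGroup n ℂ, ∀ Q : Matrix.unitaryGroup n ℂ,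
      ((U * Q : Matrix.unitaryGroup n ℂ) : Matrix n n ℂ) = z • (Q : Matrix n n ℂ) := by
  have hz : (z : ℂ) ∈ unitary ℂ := by simp [Unitary.mem_iff, ← Circle.coe_inv_eq_conj]
  refine ⟨(⟨z, hz⟩ : unitary ℂ) • 1, fun Q => ?_⟩
  change (z : ℂ) • (1 : Matrix n n ℂ) * (Q : Matrix n n ℂ) = (z : ℂ) • (Q : Matrix n n ℂ)
  rw [smul_one_mul]

instance smulInvariantMeasure_map_unitaryGroup_coe (μ : Measure (Matrix.unitaryGroup n ℂ))
    [μ.IsMulLeftInvariant] :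
    SMulInvariantMeasure Circle (Matrix n n ℂ) (μ.map (↑)) where
  measure_preimage_smul z s hs := by
    obtain ⟨U, hU⟩ := exists_unitaryGroup_coe_mul_eq_smul (n := n) z
    have hsmul : Measurable (fun A : Matrix n n ℂ => z • A) := measurable_const_smul z
    rw [Measure.map_apply measurable_subtype_coe hs,
      Measure.map_apply measurable_subtype_coe (hsmul hs),
      ← measure_preimage_mul μ U ((↑) ⁻¹' s)]
    simp only [Set.preimage_preimage, hU]

end Eigenvalues

/-- A generic eigenvalue of a Haar-distributed unitary matrix is uniformly distributed on
the unit circle: for every Borel set `S ⊆ ℂ`, the expected number of eigenvalues (with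
multiplicity) of a Haar-distributed `Q ∈ U(n)` lying in `S` equals `n` times the Haar
probability measure of the part of the unit circle lying in `S`. -/
theorem haar_unitary_generic_eigenvalue_uniform (n : ℕ) (hn : 1 ≤ n)
    (μ : Measure (Matrix.unitaryGroup (Fin n) ℂ))
    [μ.IsHaarMeasure] [IsProbabilityMeasure μ]
    (ν : Measure Circle) [ν.IsHaarMeasure] [IsProbabilityMeasure ν]
    (S : Set ℂ) (hS : MeasurableSet S) :
    ∫⁻ Q, ((((Q : Matrix (Fin n) (Fin n) ℂ).charpoly.roots.filter
        (fun z => z ∈ S)).card : ℕ) : ℝ≥0∞) ∂μ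
      = (n : ℝ≥0∞) * ν ((fun z : Circle => (z : ℂ)) ⁻¹' S) := by
  simpa only [Fintype.card_fin] using haar_unitary_generic_eigenvalue_uniform_general
    (n := Fin n) (M := Subtype.val) (μ := μ) measurable_subtype_coe.aemeasurable
    (.of_forall spectrum_unitaryGroup_subset_sphere) ν hS
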